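/- Let E be a finite set, C > 0 a real number, and w : E → ℝ with 0 < w_i ≤ C for all i ∈ E. Then for every vector x ∈ ℝ^E with 0 ≤ x_i ≤ 1 for all i and ∑_{i∈E} x_i·w_i ≤ C, the vector (1/2)·x lies in the convex hull in ℝ^E of the indicator vectors {1_S : S ⊆ E, ∑_{i∈S} w_i ≤ C}. -/

import Mathlib

open Finset

/-!
Give the items weights in an `r`-dimensional ordered space. If a point of the cube has more than
`r` fractional coordinates, their weights satisfy a nontrivial linear relation. Moving along this
relation in either direction keeps the total weight, until some fractional coordinate becomes `0`
or `1`; the point lies between the two endpoints. Iterating, the point is a convex combination of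
points of the same total weight with at most `r` fractional coordinates each. Such a point is the
indicator of a feasible set (its coordinates equal to `1`) plus a sum of at most `r` vectors
`θ • 1_{i}` with `0 < θ < 1`, all in the integer hull because singletons and `∅` are feasible.
Hence it lies in the integer hull after division by `r + 1`. For a single knapsack constraint,
`r = 1`.
-/

section Knapsack

variable {𝕜 ι V : Type*} [Field 𝕜]

theorem exists_ne_zero_support_subset_sum_smul_eq_zero [AddCommGroup V] [Module 𝕜 V]
    [FiniteDimensional 𝕜 V] (w : ι → V) {s : Finset ι} (hs : Module.finrank 𝕜 V < #s) :
    ∃ d : ι → 𝕜, d ≠ 0 ∧ Function.support d ⊆ s ∧ ∑ i ∈ s, d i • w i = 0 := by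
  classical
  have hdep : ¬ LinearIndepOn 𝕜 w (s : Set ι) := fun h =>
    hs.not_ge (by simpa using h.linearIndependent.fintype_card_le_finrank)
  obtain ⟨f, hf, i, hi, hfi⟩ := not_linearIndepOn_finset_iff.mp hdep
  refine ⟨Set.indicator s f, fun h => hfi ?_, Set.support_indicator_subset, ?_⟩
  · simpa [hi] using congrFun h i
  · rw [← hf]
    exact sum_congr rfl fun i hi => by simp [mem_coe.mpr hi]

variable [LinearOrder 𝕜]

/-- The face `[0, 1]^E` of the unit cube of `ι → 𝕜`: vectors with coordinates in `[0, 1]` that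
vanish outside `E`. It plays the role of the cube in `𝕜^E`. -/
def unitCube (𝕜 : Type*) [Zero 𝕜] [One 𝕜] [LE 𝕜] (E : Finset ι) : Set (ι → 𝕜) :=
  {x | (∀ i ∈ E, 0 ≤ x i ∧ x i ≤ 1) ∧ ∀ i ∉ E, x i = 0}

/-- The elements of `E` at which `x` takes a value strictly between `0` and `1`; their number
measures how far a point of `unitCube 𝕜 E` is from being an indicator vector. -/
def fractionalCoords (E : Finset ι) (x : ι → 𝕜) : Finset ι :=
  {i ∈ E | 0 < x i ∧ x i < 1}

/-- The indicator vectors `1_S` of the sets `S ⊆ E` of total weight at most `C`. Weights in a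
product `𝕜^r`, ordered coordinatewise, encode `r` simultaneous knapsack constraints. -/
def feasibleIndicators (𝕜 : Type*) [Zero 𝕜] [One 𝕜] [AddCommMonoid V] [LE V]
    (E : Finset ι) (w : ι → V) (C : V) : Set (ι → 𝕜) :=
  {y | ∃ S ⊆ E, ∑ i ∈ S, w i ≤ C ∧ y = Set.indicator (S : Set ι) 1}

theorem mem_fractionalCoords {E : Finset ι} {x : ι → 𝕜} {i : ι} :
    i ∈ fractionalCoords E x ↔ i ∈ E ∧ 0 < x i ∧ x i < 1 :=
  mem_filter

theorem fractionalCoords_subset (E : Finset ι) (x : ι → 𝕜) : fractionalCoords E x ⊆ E :=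
  filter_subset _ _

theorem eq_indicator_add_sum_fractionalCoords {E : Finset ι} {x : ι → 𝕜}
    (hx : x ∈ unitCube 𝕜 E) :
    x = Set.indicator ({i ∈ E | x i = 1} : Finset ι) 1 +
      ∑ i ∈ fractionalCoords E x, x i • Set.indicator ({i} : Finset ι) 1 := by
  classical
  funext j
  have hj : x j = (if j ∈ E ∧ x j = 1 then 1 else 0) +
      if j ∈ fractionalCoords E x then x j else 0 := by
    by_cases hjE : j ∈ E
    · rcases (hx.1 j hjE).1.eq_or_lt with h0 | h0
      · simp [mem_fractionalCoords, ← h0]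
      · rcases (hx.1 j hjE).2.eq_or_lt with h1 | h1
        · simp [mem_fractionalCoords, hjE, h1]
        · simp [mem_fractionalCoords, hjE, h0, h1, h1.ne]
    · simp [mem_fractionalCoords, hjE, hx.2 j hjE]
  simpa [Set.indicator_apply, Finset.sum_apply, Pi.single_apply] using hj

theorem indicator_mem_convexHull_feasibleIndicators [AddCommMonoid V] [LE V]
    {E : Finset ι} {w : ι → V} {C : V} {S : Finset ι} (hSE : S ⊆ E) (hS : ∑ i ∈ S, w i ≤ C) :
    Set.indicator (S : Set ι) 1 ∈ convexHull 𝕜 (feasibleIndicators 𝕜 E w C) :=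
  subset_convexHull 𝕜 _ ⟨S, hSE, hS, rfl⟩

theorem sum_filter_eq_one_le_sum_smul [AddCommMonoid V] [PartialOrder V] [IsOrderedAddMonoid V]
    [Module 𝕜 V] [PosSMulMono 𝕜 V] {E : Finset ι} {w : ι → V} (hw : ∀ i ∈ E, 0 ≤ w i) {x : ι → 𝕜}
    (hx : ∀ i ∈ E, 0 ≤ x i) : ∑ i ∈ E with x i = 1, w i ≤ ∑ i ∈ E, x i • w i := by
  calc
    ∑ i ∈ E with x i = 1, w i = ∑ i ∈ E with x i = 1, x i • w i :=
      sum_congr rfl fun i hi => by rw [(mem_filter.mp hi).2, one_smul]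
    _ ≤ ∑ i ∈ E, x i • w i :=
      sum_le_sum_of_subset_of_nonneg (filter_subset _ _) fun i hi _ =>
        smul_nonneg (hx i hi) (hw i hi)

variable [IsStrictOrderedRing 𝕜]

theorem inv_natCast_smul_sum_mem [AddCommGroup V] [Module 𝕜 V] {K : Set V} (hK : Convex 𝕜 K)
    (h0 : 0 ∈ K) {κ : Type*} {t : Finset κ} {z : κ → V} (hz : ∀ i ∈ t, z i ∈ K) {n : ℕ}
    (hn : #t ≤ n) : (n : 𝕜)⁻¹ • ∑ i ∈ t, z i ∈ K := by
  obtain rfl | ht := t.eq_empty_or_nonempty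
  · simpa
  have ht0 : (0 : 𝕜) < #t := by exact_mod_cast ht.card_pos
  have hn0 : (0 : 𝕜) < n := ht0.trans_le (by exact_mod_cast hn)
  have haverage : (#t : 𝕜)⁻¹ • ∑ i ∈ t, z i ∈ K := by
    rw [smul_sum]
    exact hK.sum_mem (fun _ _ => inv_nonneg.mpr ht0.le) (by simp [ht0.ne']) hz
  have hratio : (#t / n : 𝕜) ∈ Set.Icc 0 1 :=
    ⟨by positivity, div_le_one_of_le₀ (by exact_mod_cast hn) hn0.le⟩
  convert hK.smul_mem_of_zero_mem h0 haverage hratio using 1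
  rw [smul_smul]
  congr 1
  field_simp

theorem mem_of_add_smul_mem_of_add_smul_neg_mem [AddCommGroup V] [Module 𝕜 V] {K : Set V}
    (hK : Convex 𝕜 K) {x d : V} {s t : 𝕜} (hs : 0 < s) (ht : 0 < t)
    (hxs : x + s • d ∈ K) (hxt : x + t • -d ∈ K) : x ∈ K := by
  convert hK hxs hxt (a := t / (s + t)) (b := s / (s + t)) (by positivity) (by positivity)
    (by field_simp; ring) using 1
  match_scalars <;> field_simp <;> ring

theorem exists_pos_add_mul_eq_zero_or_one {a b : 𝕜} (ha0 : 0 < a) (ha1 : a < 1) (hb : b ≠ 0) :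
    ∃ t : 𝕜, 0 < t ∧ (a + t * b = 0 ∨ a + t * b = 1) ∧
      ∀ s, 0 ≤ s → s ≤ t → 0 ≤ a + s * b ∧ a + s * b ≤ 1 := by
  rcases hb.lt_or_gt with hb | hb
  · have ht : a + a / -b * b = 0 := by field_simp; ring
    exact ⟨a / -b, div_pos ha0 (neg_pos.mpr hb), .inl ht, fun s hs hst =>
      ⟨by nlinarith, by nlinarith⟩⟩
  · have ht : a + (1 - a) / b * b = 1 := by field_simp; ring
    exact ⟨(1 - a) / b, div_pos (sub_pos.mpr ha1) hb, .inr ht, fun s hs hst =>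
      ⟨by positivity, by nlinarith⟩⟩

theorem exists_add_smul_mem_unitCube_fractionalCoords_ssubset {E : Finset ι} {x d : ι → 𝕜}
    (hx : x ∈ unitCube 𝕜 E) (hd : d ≠ 0) (hdx : Function.support d ⊆ fractionalCoords E x) :
    ∃ t : 𝕜, 0 < t ∧ x + t • d ∈ unitCube 𝕜 E ∧
      fractionalCoords E (x + t • d) ⊂ fractionalCoords E x := by
  have hfrac : ∀ {i}, d i ≠ 0 → i ∈ E ∧ 0 < x i ∧ x i < 1 := fun hi =>
    mem_fractionalCoords.mp (hdx hi)
  have hexit : ∀ i, d i ≠ 0 → ∃ t, 0 < t ∧ (x i + t * d i = 0 ∨ x i + t * d i = 1) ∧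
      ∀ s, 0 ≤ s → s ≤ t → 0 ≤ x i + s * d i ∧ x i + s * d i ≤ 1 := fun i hi =>
    exists_pos_add_mul_eq_zero_or_one (hfrac hi).2.1 (hfrac hi).2.2 hi
  choose! τ hτ_pos hτ_exit hτ_mem using hexit
  obtain ⟨i, hi, hτ_min⟩ : ∃ i, d i ≠ 0 ∧ ∀ j, d j ≠ 0 → τ i ≤ τ j :=
    Set.exists_min_image _ τ ((finite_toSet _).subset hdx) (Function.support_nonempty_iff.mpr hd)
  have hfixed : ∀ {j}, d j = 0 → (x + τ i • d) j = x j := fun hj => by simp [hj]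
  refine ⟨τ i, hτ_pos i hi, ⟨fun j hj => ?_, fun j hj => ?_⟩, ?_⟩
  · by_cases hdj : d j = 0
    · simpa only [hfixed hdj] using hx.1 j hj
    · exact hτ_mem j hdj _ (hτ_pos i hi).le (hτ_min j hdj)
  · rw [hfixed (not_not.mp fun h => hj (hfrac h).1), hx.2 j hj]
  · refine (ssubset_iff_of_subset fun j hj => ?_).mpr ⟨i, hdx hi, fun h => ?_⟩
    · by_cases hdj : d j = 0
      · simpa only [mem_fractionalCoords, hfixed hdj] using hj
      · exact hdx hdj
    · obtain ⟨-, h0, h1⟩ := mem_fractionalCoords.mp h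
      exact (hτ_exit i hi).elim h0.ne' h1.ne

-- This is the Shapley–Folkman lemma for the segments `[0, w i]`.
theorem mem_convexHull_card_fractionalCoords_le_finrank [AddCommGroup V] [Module 𝕜 V]
    [FiniteDimensional 𝕜 V] {E : Finset ι} (w : ι → V) {v : V} {x : ι → 𝕜}
    (hx : x ∈ unitCube 𝕜 E) (hxv : ∑ i ∈ E, x i • w i = v) :
    x ∈ convexHull 𝕜 {y ∈ unitCube 𝕜 E | ∑ i ∈ E, y i • w i = v ∧
      #(fractionalCoords E y) ≤ Module.finrank 𝕜 V} := by
  induction hF : fractionalCoords E x using Finset.strongInduction generalizing x with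
  | H F ih =>
  subst hF
  rcases le_or_gt #(fractionalCoords E x) (Module.finrank 𝕜 V) with hcard | hcard
  · exact subset_convexHull 𝕜 _ ⟨hx, hxv, hcard⟩
  obtain ⟨d, hd, hdx, hrelation⟩ := exists_ne_zero_support_subset_sum_smul_eq_zero w hcard
  have hdw : ∑ i ∈ E, d i • w i = 0 := by
    rw [← hrelation]
    refine (sum_subset (fractionalCoords_subset E x) fun i _ hi => ?_).symm
    rw [Function.notMem_support.mp fun h => hi (hdx h), zero_smul]
  have hweight : ∀ t : 𝕜, ∑ i ∈ E, (x + t • d) i • w i = v := fun t => by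
    simp [add_smul, mul_smul, sum_add_distrib, ← smul_sum, hdw, hxv]
  obtain ⟨s, hs, hxs, hFs⟩ := exists_add_smul_mem_unitCube_fractionalCoords_ssubset hx hd hdx
  obtain ⟨t, ht, hxt, hFt⟩ := exists_add_smul_mem_unitCube_fractionalCoords_ssubset hx
    (neg_ne_zero.mpr hd) (by rwa [Function.support_neg])
  refine mem_of_add_smul_mem_of_add_smul_neg_mem (convex_convexHull 𝕜 _) hs ht
    (ih _ hFs hxs (hweight s) rfl) (ih _ hFt hxt (by simpa using hweight (-t)) rfl)

variable [AddCommGroup V] [PartialOrder V] [IsOrderedAddMonoid V] [Module 𝕜 V]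
  [PosSMulMono 𝕜 V] {E : Finset ι} {w : ι → V} {C : V}

theorem inv_smul_mem_convexHull_feasibleIndicators_of_card_fractionalCoords_le
    (hw : ∀ i ∈ E, 0 ≤ w i ∧ w i ≤ C) {x : ι → 𝕜} (hx : x ∈ unitCube 𝕜 E)
    (hxw : ∑ i ∈ E, x i • w i ≤ C) {n : ℕ} (hn : #(fractionalCoords E x) ≤ n) :
    (n + 1 : 𝕜)⁻¹ • x ∈ convexHull 𝕜 (feasibleIndicators 𝕜 E w C) := by
  have hconv := convex_convexHull 𝕜 (feasibleIndicators 𝕜 E w C)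
  have hempty : 0 ∈ convexHull 𝕜 (feasibleIndicators 𝕜 E w C) := by
    have hC : 0 ≤ C :=
      (sum_nonneg fun i hi => smul_nonneg (hx.1 i hi).1 (hw i hi).1).trans hxw
    simpa [← Pi.zero_def] using indicator_mem_convexHull_feasibleIndicators (𝕜 := 𝕜)
      (empty_subset E) (by simpa using hC)
  have hones : Set.indicator ({i ∈ E | x i = 1} : Finset ι) 1 ∈
      convexHull 𝕜 (feasibleIndicators 𝕜 E w C) :=
    indicator_mem_convexHull_feasibleIndicators (filter_subset _ _)
      ((sum_filter_eq_one_le_sum_smul (fun i hi => (hw i hi).1) fun i hi => (hx.1 i hi).1).trans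
        hxw)
  have hfractional : ∀ i ∈ fractionalCoords E x, x i • Set.indicator ({i} : Finset ι) 1 ∈
      convexHull 𝕜 (feasibleIndicators 𝕜 E w C) := fun i hi => by
    have hiE := fractionalCoords_subset E x hi
    exact hconv.smul_mem_of_zero_mem hempty
      (indicator_mem_convexHull_feasibleIndicators (by simpa using hiE)
        (by simpa using (hw i hiE).2)) (hx.1 i hiE)
  -- `none` indexes the coordinates equal to `1`, `some i` the fractional coordinate `i`.
  have hmem := inv_natCast_smul_sum_mem hconv hempty (t := insertNone (fractionalCoords E x))
    (z := fun o => o.elim (Set.indicator ({i ∈ E | x i = 1} : Finset ι) 1)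
      fun i => x i • Set.indicator (({i} : Finset ι) : Set ι) 1)
    (forall_mem_insertNone.mpr ⟨hones, hfractional⟩) (n := n + 1) (by simpa using hn)
  rw [sum_insertNone] at hmem
  simpa only [Option.elim, ← eq_indicator_add_sum_fractionalCoords hx, Nat.cast_succ] using hmem

theorem knapsack_half_LP_in_integer_hull_general [FiniteDimensional 𝕜 V]
    (hw : ∀ i ∈ E, 0 ≤ w i ∧ w i ≤ C) {x : ι → 𝕜} (hx : x ∈ unitCube 𝕜 E)
    (hxw : ∑ i ∈ E, x i • w i ≤ C) :
    (Module.finrank 𝕜 V + 1 : 𝕜)⁻¹ • x ∈ convexHull 𝕜 (feasibleIndicators 𝕜 E w C) := by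
  refine convexHull_min ?_ ((convex_convexHull 𝕜 _).smul_preimage _)
    (mem_convexHull_card_fractionalCoords_le_finrank w hx rfl)
  rintro y ⟨hy, hyw, hcard⟩
  exact inv_smul_mem_convexHull_feasibleIndicators_of_card_fractionalCoords_le hw hy
    (hyw.trans_le hxw) hcard

end Knapsack

/-- **Knapsack integrality gap ≤ 2** (with feasible singletons): any fractional point
`x` of the LP relaxation, halved, lies in the convex hull of indicator vectors of
feasible item sets. -/
theorem knapsack_half_LP_in_integer_hull {ι : Type*} [DecidableEq ι]
    (E : Finset ι) (C : ℝ) (hC : 0 < C)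
    (w : ι → ℝ) (hw : ∀ i ∈ E, 0 < w i ∧ w i ≤ C)
    (x : ι → ℝ) (hx : ∀ i ∈ E, 0 ≤ x i ∧ x i ≤ 1) (hx0 : ∀ i ∉ E, x i = 0)
    (hxw : (∑ i ∈ E, x i * w i) ≤ C) :
    (fun i => (1 / 2) * x i) ∈
      convexHull ℝ {y : ι → ℝ | ∃ S : Finset ι, S ⊆ E ∧ (∑ i ∈ S, w i) ≤ C ∧
        y = fun i => if i ∈ S then (1 : ℝ) else 0} := by
  simpa [feasibleIndicators, Pi.smul_def, funext_iff, Set.indicator_apply, one_add_one_eq_two] using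
    knapsack_half_LP_in_integer_hull_general (fun i hi => ⟨(hw i hi).1.le, (hw i hi).2⟩)
      ⟨hx, hx0⟩ hxw
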